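/- Under the observer setup, fix a real γ > 0. There exist an n×n_y real matrix L and an n×n real symmetric positive definite matrix P such that (A + L·C_y)·P + P·(A + L·C_y)ᵀ + (B_w̄ + L·D_w̄)·(B_w̄ + L·D_w̄)ᵀ is negative definite and trace(C_z·P·C_zᵀ) < γ², if and only if there exist an n×n real symmetric positive definite matrix X, an n×n_y real matrix Y, and an n_z×n_z real symmetric positive definite matrix Q such that [[M₁₁, M₁₂, Y], [M₁₂ᵀ, -I_{n_d}, 0], [Yᵀ, 0, -diag(β)]] is negative definite, [[-Q, C_z], [C_zᵀ, -X]] is negative definite, and trace(Q) < γ². Moreover, in this case L = X⁻¹·Y and P = X⁻¹ give a valid correspondence between the two feasibility sets. -/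

import Mathlib

open Matrix

/-- A real symmetric matrix `M` is negative definite if `xᵀ M x < 0` for all `x ≠ 0`. -/
def NegDef {n : Type*} [Fintype n] (M : Matrix n n ℝ) : Prop :=
  M.IsSymm ∧ ∀ x : n → ℝ, x ≠ 0 → x ⬝ᵥ M.mulVec x < 0

theorem negDef_iff_posDef_neg {m : Type*} [Fintype m] (M : Matrix m m ℝ) :
    NegDef M ↔ (-M).PosDef := by
  rw [Matrix.posDef_iff_dotProduct_mulVec]
  unfold NegDef
  refine and_congr ?_ ?_
  · simp [IsHermitian, IsSymm, conjTranspose_eq_transpose_of_trivial]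
  · simp [neg_mulVec]

theorem schur_posDef {m k : Type*} [Fintype m] [Fintype k] [DecidableEq m] [DecidableEq k]
    (A : Matrix m m ℝ) (B : Matrix m k ℝ) (D : Matrix k k ℝ) (hD : D.PosDef) :
    (fromBlocks A B Bᵀ D).PosDef ↔ (A - B * D⁻¹ * Bᵀ).PosDef := by
  have hI : Invertible D := hD.isUnit.invertible
  have h1 := Matrix.PosDef.fromBlocks₂₂ A B hD
  rw [conjTranspose_eq_transpose_of_trivial] at h1
  have h2 := isUnit_fromBlocks_iff_of_invertible₂₂ (A := A) (B := B) (C := Bᵀ) (D := D)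
  rw [invOf_eq_nonsing_inv] at h2
  constructor
  · intro h
    exact (h1.1 h.posSemidef).posDef_iff_isUnit.2 (h2.1 h.isUnit)
  · intro h
    exact (h1.2 h.posSemidef).posDef_iff_isUnit.2 (h2.2 h.isUnit)

theorem schur_negDef {m k : Type*} [Fintype m] [Fintype k] [DecidableEq m] [DecidableEq k]
    (A : Matrix m m ℝ) (B : Matrix m k ℝ) (D : Matrix k k ℝ) (hD : D.PosDef) :
    NegDef (fromBlocks A B Bᵀ (-D)) ↔ NegDef (A + B * D⁻¹ * Bᵀ) := by
  rw [negDef_iff_posDef_neg, negDef_iff_posDef_neg, fromBlocks_neg, neg_neg]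
  have := schur_posDef (-A) (-B) D hD
  rw [transpose_neg] at this
  rw [this]
  simp only [Matrix.neg_mul, Matrix.mul_neg, neg_neg]
  rw [neg_add, sub_eq_add_neg]

theorem congr_negDef {m : Type*} [Fintype m] [DecidableEq m]
    (X N : Matrix m m ℝ) (hX : X.PosDef) : NegDef (X * N * X) ↔ NegDef N := by
  rw [negDef_iff_posDef_neg, negDef_iff_posDef_neg,
    ← Matrix.IsUnit.posDef_star_right_conjugate_iff (x := -N) hX.isUnit]
  have : star X = X := hX.isHermitian
  rw [this]
  simp

theorem lmi1_iff {n nd ny : ℕ}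
    (A : Matrix (Fin n) (Fin n) ℝ) (Cy : Matrix (Fin ny) (Fin n) ℝ)
    (Bd : Matrix (Fin n) (Fin nd) ℝ)
    (Dd : Matrix (Fin ny) (Fin nd) ℝ)
    (sn : Fin ny → ℝ) (hsn : ∀ i, 0 < sn i)
    (Sd : Matrix (Fin nd) (Fin nd) ℝ)
    (β : Fin ny → ℝ) (hβ : ∀ i, β i = ((sn i)⁻¹) ^ 2)
    (X : Matrix (Fin n) (Fin n) ℝ) (L : Matrix (Fin n) (Fin ny) ℝ) (hX : X.PosDef) :
    NegDef (fromBlocks ((X * A + (X * L) * Cy) + (X * A + (X * L) * Cy)ᵀ)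
        (fromCols (X * Bd * Sd + (X * L) * Dd * Sd) (X * L))
        (fromRows (X * Bd * Sd + (X * L) * Dd * Sd)ᵀ (X * L)ᵀ)
        (fromBlocks (-(1 : Matrix (Fin nd) (Fin nd) ℝ)) 0 0 (-(diagonal β)))) ↔
    NegDef ((A + L * Cy) * X⁻¹ + X⁻¹ * (A + L * Cy)ᵀ
          + (fromCols (Bd * Sd) 0 + L * fromCols (Dd * Sd) (diagonal sn))
           * (fromCols (Bd * Sd) 0 + L * fromCols (Dd * Sd) (diagonal sn))ᵀ) := by
  have hXt : Xᵀ = X := by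
    have := hX.isHermitian
    rwa [IsHermitian, conjTranspose_eq_transpose_of_trivial] at this
  have hdet : IsUnit X.det := (isUnit_iff_isUnit_det X).1 hX.isUnit
  have hD : (fromBlocks (1 : Matrix (Fin nd) (Fin nd) ℝ) 0 0 (diagonal β)) =
      diagonal (Sum.elim 1 β) := by
    rw [← diagonal_one, fromBlocks_diagonal]; rfl
  have hβp : ∀ i, 0 < β i := fun i => by
    rw [hβ]; have := hsn i; positivity
  have hDp : (diagonal (Sum.elim 1 β : Fin nd ⊕ Fin ny → ℝ)).PosDef := by
    rw [posDef_diagonal_iff]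
    rintro (i | i)
    · simp
    · simpa using hβp i
  have hDinv : (diagonal (Sum.elim 1 β : Fin nd ⊕ Fin ny → ℝ))⁻¹ =
      fromBlocks 1 0 0 (diagonal sn * diagonal sn) := by
    apply inv_eq_left_inv
    rw [← hD, fromBlocks_multiply]
    simp only [Matrix.mul_one, Matrix.mul_zero, Matrix.zero_mul, add_zero, zero_add,
      diagonal_mul_diagonal]
    rw [← fromBlocks_one]
    congr
    funext i
    show sn i * sn i * β i = 1
    rw [hβ]
    have := (hsn i).ne'
    field_simp
  have hneg : (fromBlocks (-(1 : Matrix (Fin nd) (Fin nd) ℝ)) 0 0 (-(diagonal β))) =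
      -diagonal (Sum.elim 1 β) := by
    rw [← hD, fromBlocks_neg]; simp
  rw [hneg, ← transpose_fromCols, schur_negDef _ _ _ hDp, hDinv,
    ← congr_negDef X ((A + L * Cy) * X⁻¹ + _ + _) hX]
  apply iff_of_eq
  congr 1
  have e1 : fromCols (Bd * Sd) 0 + L * fromCols (Dd * Sd) (diagonal sn) =
      fromCols (Bd * Sd + L * (Dd * Sd)) (L * diagonal sn) := by
    rw [mul_fromCols]
    ext i (j | j) <;> simp
  rw [e1, transpose_fromCols, transpose_fromCols, fromCols_mul_fromBlocks, fromCols_mul_fromRows,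
    fromCols_mul_fromRows]
  simp only [transpose_mul, transpose_add, hXt, diagonal_transpose, Matrix.mul_add, Matrix.add_mul,
    Matrix.mul_assoc, Matrix.mul_one, Matrix.mul_zero, Matrix.zero_mul, add_zero, zero_add,
    nonsing_inv_mul _ hdet, mul_nonsing_inv_cancel_left _ _ hdet]

theorem lmi2_iff {n nz : ℕ} (Cz : Matrix (Fin nz) (Fin n) ℝ)
    (X : Matrix (Fin n) (Fin n) ℝ) (Q : Matrix (Fin nz) (Fin nz) ℝ) (hX : X.PosDef) :
    NegDef (fromBlocks (-Q) Cz Czᵀ (-X)) ↔ (Q - Cz * X⁻¹ * Czᵀ).PosDef := by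
  rw [schur_negDef _ _ _ hX, negDef_iff_posDef_neg]
  rw [neg_add, neg_neg, sub_eq_add_neg]

/-- Feasibility content of Theorem 1 (sparse `H₂` observer design): existence of an
observer gain `L` and `P ≻ 0` satisfying the `H₂` matrix inequalities is equivalent to
feasibility of the LMI in `(X, Y, Q)`; moreover `L = X⁻¹ Y`, `P = X⁻¹` give a valid
correspondence. -/
theorem h2_observer_feasibility {n nd ny nz : ℕ}
    (A : Matrix (Fin n) (Fin n) ℝ) (Cy : Matrix (Fin ny) (Fin n) ℝ)
    (Cz : Matrix (Fin nz) (Fin n) ℝ) (Bd : Matrix (Fin n) (Fin nd) ℝ)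
    (Dd : Matrix (Fin ny) (Fin nd) ℝ)
    (sd : Fin nd → ℝ) (sn : Fin ny → ℝ) (hsn : ∀ i, 0 < sn i)
    (Sd : Matrix (Fin nd) (Fin nd) ℝ) (Sn : Matrix (Fin ny) (Fin ny) ℝ)
    (hSd : Sd = diagonal sd) (hSn : Sn = diagonal sn)
    (Bw : Matrix (Fin n) (Fin nd ⊕ Fin ny) ℝ) (Dw : Matrix (Fin ny) (Fin nd ⊕ Fin ny) ℝ)
    (hBw : Bw = fromCols (Bd * Sd) 0) (hDw : Dw = fromCols (Dd * Sd) Sn)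
    (β : Fin ny → ℝ) (hβ : ∀ i, β i = ((sn i)⁻¹) ^ 2)
    (γ : ℝ) (hγ : 0 < γ) :
    ((∃ (L : Matrix (Fin n) (Fin ny) ℝ) (P : Matrix (Fin n) (Fin n) ℝ), P.PosDef ∧
        NegDef ((A + L * Cy) * P + P * (A + L * Cy)ᵀ
          + (Bw + L * Dw) * (Bw + L * Dw)ᵀ)
        ∧ (Cz * P * Czᵀ).trace < γ ^ 2) ↔
      (∃ (X : Matrix (Fin n) (Fin n) ℝ) (Y : Matrix (Fin n) (Fin ny) ℝ)
          (Q : Matrix (Fin nz) (Fin nz) ℝ), X.PosDef ∧ Q.PosDef ∧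
        NegDef (fromBlocks ((X * A + Y * Cy) + (X * A + Y * Cy)ᵀ)
          (fromCols (X * Bd * Sd + Y * Dd * Sd) Y)
          (fromRows (X * Bd * Sd + Y * Dd * Sd)ᵀ Yᵀ)
          (fromBlocks (-(1 : Matrix (Fin nd) (Fin nd) ℝ)) 0 0 (-(diagonal β))))
        ∧ NegDef (fromBlocks (-Q) Cz Czᵀ (-X)) ∧ Q.trace < γ ^ 2))
    ∧
    (∀ (X : Matrix (Fin n) (Fin n) ℝ) (Y : Matrix (Fin n) (Fin ny) ℝ)
        (Q : Matrix (Fin nz) (Fin nz) ℝ), X.PosDef → Q.PosDef →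
      NegDef (fromBlocks ((X * A + Y * Cy) + (X * A + Y * Cy)ᵀ)
        (fromCols (X * Bd * Sd + Y * Dd * Sd) Y)
        (fromRows (X * Bd * Sd + Y * Dd * Sd)ᵀ Yᵀ)
        (fromBlocks (-(1 : Matrix (Fin nd) (Fin nd) ℝ)) 0 0 (-(diagonal β)))) →
      NegDef (fromBlocks (-Q) Cz Czᵀ (-X)) → Q.trace < γ ^ 2 →
      ((X⁻¹).PosDef ∧
        NegDef ((A + (X⁻¹ * Y) * Cy) * X⁻¹ + X⁻¹ * (A + (X⁻¹ * Y) * Cy)ᵀ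
          + (Bw + (X⁻¹ * Y) * Dw) * (Bw + (X⁻¹ * Y) * Dw)ᵀ)
        ∧ (Cz * X⁻¹ * Czᵀ).trace < γ ^ 2)) := by
  subst hSd hSn hBw hDw
  have key : ∀ (X : Matrix (Fin n) (Fin n) ℝ) (Y : Matrix (Fin n) (Fin ny) ℝ)
        (Q : Matrix (Fin nz) (Fin nz) ℝ), X.PosDef → Q.PosDef →
      NegDef (fromBlocks ((X * A + Y * Cy) + (X * A + Y * Cy)ᵀ)
        (fromCols (X * Bd * diagonal sd + Y * Dd * diagonal sd) Y)
        (fromRows (X * Bd * diagonal sd + Y * Dd * diagonal sd)ᵀ Yᵀ)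
        (fromBlocks (-(1 : Matrix (Fin nd) (Fin nd) ℝ)) 0 0 (-(diagonal β)))) →
      NegDef (fromBlocks (-Q) Cz Czᵀ (-X)) → Q.trace < γ ^ 2 →
      ((X⁻¹).PosDef ∧
        NegDef ((A + (X⁻¹ * Y) * Cy) * X⁻¹ + X⁻¹ * (A + (X⁻¹ * Y) * Cy)ᵀ
          + (fromCols (Bd * diagonal sd) 0 +
              (X⁻¹ * Y) * fromCols (Dd * diagonal sd) (diagonal sn)) *
            (fromCols (Bd * diagonal sd) 0 +
              (X⁻¹ * Y) * fromCols (Dd * diagonal sd) (diagonal sn))ᵀ)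
        ∧ (Cz * X⁻¹ * Czᵀ).trace < γ ^ 2) := by
    intro X Y Q hX hQ h1 h2 h3
    have hdet : IsUnit X.det := (isUnit_iff_isUnit_det X).1 hX.isUnit
    refine ⟨hX.inv, ?_, ?_⟩
    · have hY : X * (X⁻¹ * Y) = Y := mul_nonsing_inv_cancel_left _ _ hdet
      rw [← lmi1_iff A Cy Bd Dd sn hsn (diagonal sd) β hβ X (X⁻¹ * Y) hX, hY]
      exact h1
    · have := ((lmi2_iff Cz X Q hX).1 h2).posSemidef.trace_nonneg
      rw [trace_sub] at this
      linarith
  refine ⟨⟨?_, ?_⟩, key⟩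
  · rintro ⟨L, P, hP, h1, h2⟩
    have hPP : P⁻¹⁻¹ = P :=
      nonsing_inv_nonsing_inv P ((isUnit_iff_isUnit_det P).1 hP.isUnit)
    have hε : 0 < (γ ^ 2 - (Cz * P * Czᵀ).trace) / (nz + 1) :=
      div_pos (by linarith) (by positivity)
    set ε := (γ ^ 2 - (Cz * P * Czᵀ).trace) / (nz + 1) with hεd
    have hεe : ε * (nz + 1) = γ ^ 2 - (Cz * P * Czᵀ).trace := by
      rw [hεd]; field_simp
    have hI : (ε • (1 : Matrix (Fin nz) (Fin nz) ℝ)).PosDef := Matrix.PosDef.one.smul hε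
    refine ⟨P⁻¹, P⁻¹ * L, Cz * P * Czᵀ + ε • 1, hP.inv, ?_, ?_, ?_, ?_⟩
    · have := hP.posSemidef.mul_mul_conjTranspose_same Cz
      rw [conjTranspose_eq_transpose_of_trivial] at this
      exact Matrix.PosDef.posSemidef_add this hI
    · rw [lmi1_iff A Cy Bd Dd sn hsn (diagonal sd) β hβ P⁻¹ L hP.inv, hPP]
      exact h1
    · rw [lmi2_iff _ _ _ hP.inv, hPP, add_sub_cancel_left]
      exact hI
    · rw [trace_add, trace_smul, trace_one]
      simp only [Fintype.card_fin, smul_eq_mul]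
      linarith
  · rintro ⟨X, Y, Q, hX, hQ, h1, h2, h3⟩
    exact ⟨X⁻¹ * Y, X⁻¹, key X Y Q hX hQ h1 h2 h3⟩
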